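/- Let (A,B) be a NITA generated by a non-real b_3 of degree 3, with no nontrivial basis elements of degree 1 or 2, satisfying b̄_3·b_3 = 1 + b_8 and b_3² = c_3 + b_6 with c_3 = c̄_3 real of degree 3. Then c_3² = 1 + b_8, b̄_3·c_3 = b_3 + x_6 for some non-real x_6 ∈ B of degree 6, b_8·b_3 = x_6 + b_6·b̄_3, b̄_6·c_3 = x_6·b̄_3, c_3·b_8 = b_6 + x_6·b_3, and (b_8·b_3, b_8·b_3) ∈ {3, 4}. -/

import Mathlib

/-- A normalized table algebra datum on a commutative `ℂ`-algebra `A`: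
a distinguished basis `B` containing `1`, an involutive algebra
endomorphism `bar` permuting `B`, a bilinear form for which `B` is
orthonormal and which satisfies `(a, bc) = (a·b̄, c)`, nonnegative real
structure constants, and a degree homomorphism positive on `B`. -/
structure TAData (A : Type) [CommRing A] [Algebra ℂ A] : Type where
  B : Finset A
  one_mem : (1 : A) ∈ B
  indep : LinearIndependent ℂ (fun b : {x : A // x ∈ B} => (b : A))
  span_top : Submodule.span ℂ (B : Set A) = ⊤
  bar : A →ₐ[ℂ] A
  bar_bar : ∀ a : A, bar (bar a) = a
  bar_mem : ∀ b ∈ B, bar b ∈ B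
  ip : A →ₗ[ℂ] A →ₗ[ℂ] ℂ
  ip_symm : ∀ a b : A, ip a b = ip b a
  ip_self : ∀ b ∈ B, ip b b = 1
  ip_ne : ∀ b ∈ B, ∀ c ∈ B, b ≠ c → ip b c = 0
  ip_assoc : ∀ a b c : A, ip a (b * c) = ip (a * bar b) c
  struct_nonneg : ∀ b ∈ B, ∀ c ∈ B, ∀ d ∈ B, ∃ r : ℝ, 0 ≤ r ∧ ip (b * c) d = (r : ℂ)
  deg : A →ₐ[ℂ] ℂ
  deg_pos : ∀ b ∈ B, ∃ r : ℝ, 0 < r ∧ deg b = (r : ℂ)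

namespace TAData

variable {A : Type} [CommRing A] [Algebra ℂ A]

/-- Integrality (making a table algebra a NITA): all structure constants are
nonnegative integers and all degrees are positive integers. -/
def Integral (T : TAData A) : Prop :=
  (∀ b ∈ T.B, ∀ c ∈ T.B, ∀ d ∈ T.B, ∃ n : ℕ, T.ip (b * c) d = (n : ℂ)) ∧
  (∀ b ∈ T.B, ∃ n : ℕ, 0 < n ∧ T.deg b = (n : ℂ))

/-- `L₁(B) = {1}` and `L₂(B) = ∅`: no nontrivial basis elements of degree 1 or 2. -/
def NoSmall (T : TAData A) : Prop :=
  (∀ b ∈ T.B, T.deg b = 1 → b = 1) ∧ (∀ b ∈ T.B, T.deg b ≠ 2)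

/-- The table algebra is generated (as an algebra) by `b` (and its conjugate). -/
def GeneratedBy (T : TAData A) (b : A) : Prop :=
  Algebra.adjoin ℂ ({b, T.bar b} : Set A) = ⊤

/-- A table subset of `B`: contains `1`, closed under the involution and under
supports of products. -/
def IsTableSubset (T : TAData A) (C : Set A) : Prop :=
  C ⊆ ↑T.B ∧ (1 : A) ∈ C ∧ (∀ b ∈ C, T.bar b ∈ C) ∧
    ∀ b ∈ C, ∀ c ∈ C, ∀ d ∈ T.B, T.ip (b * c) d ≠ 0 → d ∈ C

end TAData

namespace TAData

variable {A : Type} [CommRing A] [Algebra ℂ A]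

/-- Nonnegative integral combinations of basis elements. -/
def cone (T : TAData A) : AddSubmonoid A := AddSubmonoid.closure (T.B : Set A)

theorem basis_mem_cone (T : TAData A) {b : A} (hb : b ∈ T.B) : b ∈ T.cone :=
  AddSubmonoid.subset_closure hb

theorem ip_basis (T : TAData A) {b c : A} (hb : b ∈ T.B) (hc : c ∈ T.B) [Decidable (b = c)] :
    T.ip b c = if b = c then 1 else 0 := by
  split_ifs with h
  · rw [← h]; exact T.ip_self b hb
  · exact T.ip_ne b hb c hc h

theorem ip_mul_left (T : TAData A) (x y z : A) : T.ip (x * y) z = T.ip y (T.bar x * z) := by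
  rw [T.ip_assoc, T.bar_bar, mul_comm]

theorem ip_mul_right (T : TAData A) (x y z : A) : T.ip (x * y) z = T.ip x (T.bar y * z) := by
  rw [mul_comm, ip_mul_left]

theorem ip_basis_of_deg_ne (T : TAData A) {b c : A} (hb : b ∈ T.B) (hc : c ∈ T.B)
    (h : T.deg b ≠ T.deg c) : T.ip b c = 0 :=
  T.ip_ne b hb c hc fun e => h (by rw [e])

theorem eq_sum_ip (T : TAData A) (y : A) : y = ∑ b ∈ T.B, T.ip y b • b := by
  classical
  have hy : y ∈ Submodule.span ℂ (T.B : Set A) := by rw [T.span_top]; trivial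
  obtain ⟨f, -, rfl⟩ := Submodule.mem_span_finset.1 hy
  refine Finset.sum_congr rfl fun b hb => ?_
  congr 1
  rw [map_sum, LinearMap.sum_apply, Finset.sum_eq_single b]
  · simp [T.ip_self b hb]
  · intro c hc hcb
    simp [T.ip_ne c hc b hb hcb]
  · exact fun h => absurd hb h

theorem deg_bar (T : TAData A) (y : A) : T.deg (T.bar y) = T.deg y := by
  set e : A := ∑ b ∈ T.B, T.deg (T.bar b) • b with he
  have hey : y * e = T.deg y • e := by
    have hcoef : ∀ d ∈ T.B, T.ip (y * e) d = T.deg y * T.deg (T.bar d) := by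
      intro d hd
      have h2 : T.deg (T.bar (T.bar y * d)) =
          ∑ b ∈ T.B, T.ip (T.bar y * d) b * T.deg (T.bar b) := by
        conv_lhs => rw [T.eq_sum_ip (T.bar y * d)]
        simp
      rw [map_mul, T.bar_bar, map_mul] at h2
      rw [h2, T.ip_mul_left, he, map_sum, LinearMap.sum_apply]
      refine Finset.sum_congr rfl fun b _ => ?_
      rw [map_smul, LinearMap.smul_apply, T.ip_symm b, smul_eq_mul, mul_comm]
    rw [T.eq_sum_ip (y * e), he, Finset.smul_sum]
    refine Finset.sum_congr rfl fun d hd => ?_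
    rw [← he, hcoef d hd, smul_smul]
  have hpos : T.deg (T.bar e) ≠ 0 := by
    have hr : ∀ b ∈ T.B, ∃ r : ℝ, 0 < r ∧ T.deg (T.bar b) = (r : ℂ) :=
      fun b hb => T.deg_pos _ (T.bar_mem b hb)
    choose! r hr0 hr using hr
    have : T.deg (T.bar e) = ((∑ b ∈ T.B, r b * r b : ℝ) : ℂ) := by
      rw [he, map_sum, map_sum, Complex.ofReal_sum]
      refine Finset.sum_congr rfl fun b hb => ?_
      rw [map_smul, map_smul, hr b hb, smul_eq_mul, Complex.ofReal_mul]
    rw [this]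
    exact_mod_cast (Finset.sum_pos (fun b hb => mul_pos (hr0 b hb) (hr0 b hb))
      ⟨1, T.one_mem⟩).ne'
  have := congrArg (fun z => T.deg (T.bar z)) hey
  simp only [map_mul, map_smul, smul_eq_mul] at this
  exact mul_right_cancel₀ hpos this

theorem mem_cone_of_ip (T : TAData A) {y : A}
    (h : ∀ b ∈ T.B, ∃ n : ℕ, T.ip y b = (n : ℂ)) : y ∈ T.cone := by
  rw [T.eq_sum_ip y]
  refine sum_mem fun b hb => ?_
  obtain ⟨n, hn⟩ := h b hb
  rw [hn, Nat.cast_smul_eq_nsmul]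
  exact nsmul_mem (T.basis_mem_cone hb) n

theorem mul_mem_cone (T : TAData A) (hInt : T.Integral) {b c : A} (hb : b ∈ T.B) (hc : c ∈ T.B) :
    b * c ∈ T.cone :=
  T.mem_cone_of_ip (hInt.1 b hb c hc)

theorem exists_ip_eq_natCast (T : TAData A) {y z : A} (hy : y ∈ T.cone) (hz : z ∈ T.cone) :
    ∃ n : ℕ, T.ip y z = (n : ℂ) := by
  classical
  induction hy using AddSubmonoid.closure_induction with
  | mem b hb =>
    induction hz using AddSubmonoid.closure_induction with
    | mem c hc =>
      rw [T.ip_basis hb hc]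
      split_ifs
      · exact ⟨1, by simp⟩
      · exact ⟨0, by simp⟩
    | zero => exact ⟨0, by simp⟩
    | add x y _ _ hx hy =>
      obtain ⟨m, hm⟩ := hx
      obtain ⟨n, hn⟩ := hy
      exact ⟨m + n, by simp [hm, hn]⟩
  | zero => exact ⟨0, by simp⟩
  | add x y _ _ hx hy =>
    obtain ⟨m, hm⟩ := hx
    obtain ⟨n, hn⟩ := hy
    exact ⟨m + n, by simp [hm, hn]⟩

theorem exists_deg_eq_natCast (T : TAData A) (hInt : T.Integral) {y : A} (hy : y ∈ T.cone) :
    ∃ n : ℕ, T.deg y = (n : ℂ) := by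
  induction hy using AddSubmonoid.closure_induction with
  | mem b hb =>
    obtain ⟨n, -, hn⟩ := hInt.2 b hb
    exact ⟨n, hn⟩
  | zero => exact ⟨0, by simp⟩
  | add x y _ _ hx hy =>
    obtain ⟨m, hm⟩ := hx
    obtain ⟨n, hn⟩ := hy
    exact ⟨m + n, by simp [hm, hn]⟩

theorem exists_eq_add (T : TAData A) {y : A} (hy : y ∈ T.cone) (h0 : y ≠ 0) :
    ∃ b ∈ T.B, ∃ z ∈ T.cone, y = b + z := by
  induction hy using AddSubmonoid.closure_induction with
  | mem b hb => exact ⟨b, hb, 0, zero_mem _, by simp⟩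
  | zero => exact absurd rfl h0
  | add x y hxc hyc hx hy =>
    by_cases hx0 : x = 0
    · subst hx0
      rw [zero_add] at h0 ⊢
      exact hy h0
    · obtain ⟨b, hb, z, hz, rfl⟩ := hx hx0
      exact ⟨b, hb, z + y, add_mem hz hyc, by ring⟩

theorem exists_eq_add_of_ip_ne_zero (T : TAData A) {y x : A} (hy : y ∈ T.cone) (hx : x ∈ T.B)
    (h0 : T.ip y x ≠ 0) : ∃ z ∈ T.cone, y = x + z := by
  induction hy using AddSubmonoid.closure_induction with
  | mem b hb =>
    have : b = x := by
      by_contra h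
      exact h0 (T.ip_ne b hb x hx h)
    exact ⟨0, zero_mem _, by simp [this]⟩
  | zero => simp at h0
  | add u v huc hvc hu hv =>
    by_cases hu0 : T.ip u x = 0
    · have : T.ip v x ≠ 0 := by
        intro h
        simp [hu0, h] at h0
      obtain ⟨z, hz, rfl⟩ := hv this
      exact ⟨u + z, add_mem huc hz, by ring⟩
    · obtain ⟨z, hz, rfl⟩ := hu hu0
      exact ⟨z + v, add_mem hz hvc, by ring⟩

theorem exists_eq_nsmul_add (T : TAData A) {y x : A} (hy : y ∈ T.cone) (hx : x ∈ T.B) {m : ℕ}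
    (h : T.ip y x = (m : ℂ)) : ∃ z ∈ T.cone, y = m • x + z := by
  induction m generalizing y with
  | zero => exact ⟨y, hy, by simp⟩
  | succ m ih =>
    obtain ⟨z, hz, rfl⟩ := T.exists_eq_add_of_ip_ne_zero hy hx (by
      rw [h]; exact_mod_cast Nat.succ_ne_zero m)
    rw [map_add, LinearMap.add_apply, T.ip_self x hx] at h
    obtain ⟨t, ht, rfl⟩ := ih hz (by push_cast at h; linear_combination h)
    exact ⟨t, ht, by rw [succ_nsmul]; abel⟩

theorem mul_deg_le (T : TAData A) (hInt : T.Integral) {y x : A} (hy : y ∈ T.cone) (hx : x ∈ T.B)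
    {m d n : ℕ} (h : T.ip y x = (m : ℂ)) (hdx : T.deg x = (d : ℂ)) (hdy : T.deg y = (n : ℂ)) :
    m * d ≤ n := by
  obtain ⟨z, hz, rfl⟩ := T.exists_eq_nsmul_add hy hx h
  obtain ⟨k, hk⟩ := T.exists_deg_eq_natCast hInt hz
  rw [map_add, map_nsmul, hdx, hk, nsmul_eq_mul] at hdy
  have : m * d + k = n := by exact_mod_cast hdy
  omega

theorem exists_ip_add_self (T : TAData A) {b z : A} (hb : b ∈ T.B) (hz : z ∈ T.cone) :
    ∃ n : ℕ, T.ip (b + z) (b + z) = 1 + 2 * (n : ℂ) + T.ip z z := by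
  obtain ⟨n, hn⟩ := T.exists_ip_eq_natCast (T.basis_mem_cone hb) hz
  refine ⟨n, ?_⟩
  have := T.ip_symm z b
  simp only [map_add, LinearMap.add_apply, T.ip_self b hb, hn, this]
  ring

theorem eq_zero_of_ip_self (T : TAData A) {y : A} (hy : y ∈ T.cone) (h : T.ip y y = 0) :
    y = 0 := by
  by_contra h0
  obtain ⟨b, hb, z, hz, rfl⟩ := T.exists_eq_add hy h0
  obtain ⟨n, hn⟩ := T.exists_ip_add_self hb hz
  obtain ⟨m, hm⟩ := T.exists_ip_eq_natCast hz hz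
  rw [hn, hm] at h
  have : 1 + 2 * n + m = 0 := by exact_mod_cast h
  omega

theorem mem_basis_of_ip_self (T : TAData A) {y : A} (hy : y ∈ T.cone) (h : T.ip y y = 1) :
    y ∈ T.B := by
  have h0 : y ≠ 0 := by
    rintro rfl
    simp at h
  obtain ⟨b, hb, z, hz, rfl⟩ := T.exists_eq_add hy h0
  obtain ⟨n, hn⟩ := T.exists_ip_add_self hb hz
  obtain ⟨m, hm⟩ := T.exists_ip_eq_natCast hz hz
  rw [hn, hm] at h
  have h' : 1 + 2 * n + m = 1 := by exact_mod_cast h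
  have : m = 0 := by omega
  subst this
  rw [T.eq_zero_of_ip_self hz (by simpa using hm), add_zero]
  exact hb

theorem eq_zero_of_deg (T : TAData A) (hInt : T.Integral) {y : A} (hy : y ∈ T.cone)
    (h : T.deg y = 0) : y = 0 := by
  by_contra h0
  obtain ⟨b, hb, z, hz, rfl⟩ := T.exists_eq_add hy h0
  obtain ⟨n, hn0, hn⟩ := hInt.2 b hb
  obtain ⟨m, hm⟩ := T.exists_deg_eq_natCast hInt hz
  rw [map_add, hn, hm] at h
  have : n + m = 0 := by exact_mod_cast h
  omega

theorem eq_one_of_deg (T : TAData A) (hInt : T.Integral) (hSmall : T.NoSmall) {y : A}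
    (hy : y ∈ T.cone) (h : T.deg y = 1) : y = 1 := by
  have h0 : y ≠ 0 := by
    rintro rfl
    simp at h
  obtain ⟨b, hb, z, hz, rfl⟩ := T.exists_eq_add hy h0
  obtain ⟨n, hn0, hn⟩ := hInt.2 b hb
  obtain ⟨m, hm⟩ := T.exists_deg_eq_natCast hInt hz
  rw [map_add, hn, hm] at h
  have h' : n + m = 1 := by exact_mod_cast h
  obtain ⟨rfl, rfl⟩ : n = 1 ∧ m = 0 := by omega
  rw [T.eq_zero_of_deg hInt hz (by simpa using hm), add_zero]
  exact hSmall.1 b hb (by simpa using hn)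

theorem exists_deg_eq_of_ne_one (T : TAData A) (hInt : T.Integral) (hSmall : T.NoSmall) {b : A}
    (hb : b ∈ T.B) (h1 : b ≠ 1) : ∃ n : ℕ, 3 ≤ n ∧ T.deg b = (n : ℂ) := by
  obtain ⟨n, hn0, hn⟩ := hInt.2 b hb
  refine ⟨n, ?_, hn⟩
  by_contra hlt
  obtain rfl | rfl : n = 1 ∨ n = 2 := by omega
  · exact h1 (hSmall.1 b hb (by simpa using hn))
  · exact hSmall.2 b hb (by simpa using hn)

/-- A nonzero element of the cone orthogonal to `1` has a constituent of degree at least `3`. -/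
theorem exists_eq_add_of_ip_one (T : TAData A) (hInt : T.Integral) (hSmall : T.NoSmall) {y : A}
    (hy : y ∈ T.cone) (h0 : y ≠ 0) (h1 : T.ip y 1 = 0) :
    ∃ b ∈ T.B, ∃ z ∈ T.cone, y = b + z ∧ T.ip z 1 = 0 ∧
      ∃ n : ℕ, 3 ≤ n ∧ T.deg b = (n : ℂ) := by
  obtain ⟨b, hb, z, hz, rfl⟩ := T.exists_eq_add hy h0
  obtain ⟨m, hm⟩ := T.exists_ip_eq_natCast (T.basis_mem_cone hb) (T.basis_mem_cone T.one_mem)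
  obtain ⟨n, hn⟩ := T.exists_ip_eq_natCast hz (T.basis_mem_cone T.one_mem)
  rw [map_add, LinearMap.add_apply, hm, hn] at h1
  have h' : m + n = 0 := by exact_mod_cast h1
  obtain ⟨rfl, rfl⟩ : m = 0 ∧ n = 0 := by omega
  refine ⟨b, hb, z, hz, rfl, by simpa using hn, ?_⟩
  refine T.exists_deg_eq_of_ne_one hInt hSmall hb ?_
  rintro rfl
  rw [T.ip_self 1 hb] at hm
  simp at hm

/-- If `c² = 1 + b₈`, two degree `3` elements `u`, `v` with a common constituent of `cu`
and `cv` coincide. -/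
theorem eq_of_common_constituent (T : TAData A) (hInt : T.Integral) (hSmall : T.NoSmall)
    {b8 c w u v : A} (hb8 : b8 ∈ T.B) (hd8 : T.deg b8 = 8) (hrb8 : T.bar b8 = b8)
    (hc : c ∈ T.B) (hrc : T.bar c = c) (hcc : c * c = 1 + b8) (hw : w ∈ T.B)
    (hu : u ∈ T.B) (hdu : T.deg u = 3) (hv : v ∈ T.B) (hdv : T.deg v = 3)
    (hwu : T.ip (c * u) w ≠ 0) (hwv : T.ip (c * v) w ≠ 0) : u = v := by
  by_contra huv
  obtain ⟨P, hP, hPe⟩ := T.exists_eq_add_of_ip_ne_zero (T.mul_mem_cone hInt hc hu) hw hwu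
  obtain ⟨Q, hQ, hQe⟩ := T.exists_eq_add_of_ip_ne_zero (T.mul_mem_cone hInt hc hv) hw hwv
  obtain ⟨k, hk⟩ := T.exists_ip_eq_natCast (T.basis_mem_cone hw) hQ
  obtain ⟨l, hl⟩ := T.exists_ip_eq_natCast hP (add_mem (T.basis_mem_cone hw) hQ)
  have e1 : T.ip (c * u) (c * v) = 1 + k + l := by
    rw [hPe, hQe, map_add T.ip, LinearMap.add_apply, hl, map_add, hk, T.ip_self w hw]
  have e2 : T.ip (c * u) (c * v) = T.ip (T.bar u * v) b8 := by
    have : T.bar c * (c * v) = v + b8 * v := by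
      rw [hrc]
      linear_combination v * hcc
    rw [T.ip_mul_left, this, map_add, T.ip_ne u hu v hv huv, T.ip_mul_left, T.bar_bar,
      mul_comm u b8, T.ip_symm, T.ip_mul_left, hrb8, zero_add, T.ip_symm]
  have hne : T.ip (T.bar u * v) b8 ≠ 0 := by
    rw [← e2, e1]
    exact_mod_cast (by omega : 1 + k + l ≠ 0)
  obtain ⟨R, hR, hRe⟩ := T.exists_eq_add_of_ip_ne_zero
    (T.mul_mem_cone hInt (T.bar_mem u hu) hv) hb8 hne
  have hdR : T.deg R = 1 := by
    have h := congrArg T.deg hRe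
    rw [map_mul, map_add, T.deg_bar, hdu, hdv, hd8] at h
    linear_combination -h
  have hR1 := T.eq_one_of_deg hInt hSmall hR hdR
  subst hR1
  have h1 : T.ip (T.bar u * v) 1 = 1 := by
    rw [hRe, map_add, LinearMap.add_apply, T.ip_self 1 T.one_mem,
      T.ip_basis_of_deg_ne hb8 T.one_mem (by rw [hd8, map_one]; norm_num), zero_add]
  rw [T.ip_mul_left, T.bar_bar, mul_one, T.ip_ne v hv u hu (Ne.symm huv)] at h1
  exact zero_ne_one h1

/-- For `v` of degree `5` and `w` of degree `6`, the multiplicity of `w` in `cv` is not `2`. -/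
theorem ip_mul_ne_two_of_deg_five (T : TAData A) (hInt : T.Integral)
    {b8 c w v : A} (hb8 : b8 ∈ T.B) (hd8 : T.deg b8 = 8)
    (hc : c ∈ T.B) (hdc : T.deg c = 3) (hrc : T.bar c = c) (hcc : c * c = 1 + b8)
    (hw : w ∈ T.B) (hdw : T.deg w = 6) (hv : v ∈ T.B) (hdv : T.deg v = 5) :
    T.ip (c * v) w ≠ 2 := by
  intro h2
  obtain ⟨P, hP, hPe⟩ := T.exists_eq_nsmul_add (m := 2) (T.mul_mem_cone hInt hc hv) hw
    (by exact_mod_cast h2)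
  have hP0 : P ≠ 0 := by
    rintro rfl
    have h := congrArg T.deg hPe
    simp only [map_mul, map_add, map_nsmul, hdc, hdv, hdw, map_zero] at h
    norm_num at h
  obtain ⟨k, hk⟩ := T.exists_ip_eq_natCast (T.basis_mem_cone hw) hP
  obtain ⟨l, hl⟩ := T.exists_ip_eq_natCast hP hP
  have hl0 : l ≠ 0 := by
    rintro rfl
    exact hP0 (T.eq_zero_of_ip_self hP (by simpa using hl))
  have hvv := T.mul_mem_cone hInt hv (T.bar_mem v hv)
  obtain ⟨m, hm⟩ := T.exists_ip_eq_natCast hvv (T.basis_mem_cone hb8)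
  have e1 : T.ip (c * v) (c * v) = 4 + 4 * k + l := by
    have := T.ip_symm P w
    rw [hPe, two_nsmul]
    simp only [map_add, LinearMap.add_apply, T.ip_self w hw, this, hk, hl]
    ring
  have e2 : T.ip (c * v) (c * v) = 1 + m := by
    have : T.bar c * (c * v) = v + v * b8 := by
      rw [hrc]
      linear_combination v * hcc
    rw [T.ip_mul_left, this, map_add, T.ip_self v hv, ← hm, T.ip_mul_right, T.bar_bar]
  have h := mul_deg_le T hInt hvv hb8 (d := 8) (n := 25) hm (by exact_mod_cast hd8)
    (by rw [map_mul, T.deg_bar, hdv]; norm_num)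
  have : 4 + 4 * k + l = 1 + m := by exact_mod_cast e1.symm.trans e2
  omega

/-- The constituents of `wc` for `w` of degree `6`: once `b₈`, and one or two further ones. -/
theorem ip_mul_self_of_deg_six (T : TAData A) (hInt : T.Integral) (hSmall : T.NoSmall)
    {b8 c w : A} (hb8 : b8 ∈ T.B) (hd8 : T.deg b8 = 8) (hrb8 : T.bar b8 = b8)
    (hc : c ∈ T.B) (hdc : T.deg c = 3) (hrc : T.bar c = c) (hcc : c * c = 1 + b8)
    (hw : w ∈ T.B) (hdw : T.deg w = 6) (h8 : T.ip (w * c) b8 ≠ 0) :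
    T.ip (w * c) b8 = 1 ∧
      (T.ip (w * c) (w * c) = 2 ∨ T.ip (w * c) (w * c) = 3) := by
  obtain ⟨P, hP, hPe⟩ := T.exists_eq_add_of_ip_ne_zero (T.mul_mem_cone hInt hw hc) hb8 h8
  have hmove : ∀ u, T.ip (w * c) u = T.ip (c * u) w := fun u => by
    rw [T.ip_mul_right, hrc, T.ip_symm]
  have hb81 : T.ip b8 1 = 0 :=
    T.ip_basis_of_deg_ne hb8 T.one_mem (by rw [hd8, map_one]; norm_num)
  have hP1 : T.ip P 1 = 0 := by
    have h : T.ip (w * c) 1 = 0 := by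
      rw [hmove, mul_one]
      exact T.ip_basis_of_deg_ne hc hw (by rw [hdc, hdw]; norm_num)
    rw [hPe, map_add, LinearMap.add_apply, hb81, zero_add] at h
    exact h
  have hdP : T.deg P = 10 := by
    have h := congrArg T.deg hPe
    rw [map_mul, map_add, hdc, hdw, hd8] at h
    linear_combination -h
  have hne0 : ∀ {z : A}, T.deg z ≠ 0 → z ≠ 0 := by
    rintro z hz rfl
    exact hz (map_zero _)
  obtain ⟨u, hu, Q, hQ, rfl, hQ1, m, hm, hdu⟩ := T.exists_eq_add_of_ip_one hInt hSmall hP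
    (hne0 (by rw [hdP]; norm_num)) hP1
  rw [map_add, hdu] at hdP
  by_cases hQ0 : Q = 0
  · subst hQ0
    have hbu : T.ip b8 u = 0 := T.ip_basis_of_deg_ne hb8 hu (by
      rw [map_zero, add_zero] at hdP
      rw [hd8, hdu, hdP]; norm_num)
    have hub := T.ip_symm u b8
    rw [hbu] at hub
    rw [hPe, add_zero]
    simp only [map_add, LinearMap.add_apply, T.ip_self _ hu, T.ip_self _ hb8, hbu, hub]
    norm_num
  obtain ⟨v, hv, R, hR, rfl, hR1, n, hn, hdv⟩ :=
    T.exists_eq_add_of_ip_one hInt hSmall hQ hQ0 hQ1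
  rw [map_add, hdv] at hdP
  by_cases hR0 : R = 0
  · subst hR0
    have hmn : m + n = 10 := by
      rw [map_zero, add_zero] at hdP
      exact_mod_cast hdP
    have hbu : T.ip b8 u = 0 := T.ip_basis_of_deg_ne hb8 hu (by
      rw [hd8, hdu]; exact_mod_cast (by omega : 8 ≠ m))
    have hbv : T.ip b8 v = 0 := T.ip_basis_of_deg_ne hb8 hv (by
      rw [hd8, hdv]; exact_mod_cast (by omega : 8 ≠ n))
    have huv : u ≠ v := by
      rintro rfl
      have : m = n := by exact_mod_cast hdu.symm.trans hdv
      obtain rfl : n = 5 := by omega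
      refine T.ip_mul_ne_two_of_deg_five hInt hb8 hd8 hc hdc hrc hcc hw hdw hu
        (by simpa using hdv) ?_
      rw [← hmove, hPe]
      simp only [map_add, LinearMap.add_apply, T.ip_self _ hu, hbu, map_zero,
        LinearMap.zero_apply]
      norm_num
    have huv' := T.ip_ne u hu v hv huv
    have hvu := T.ip_ne v hv u hu huv.symm
    have hub := T.ip_symm u b8
    have hvb := T.ip_symm v b8
    rw [hbu] at hub
    rw [hbv] at hvb
    rw [hPe, add_zero]
    simp only [map_add, LinearMap.add_apply, T.ip_self _ hu, T.ip_self _ hv, T.ip_self _ hb8,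
      hbu, hub, hbv, hvb, huv', hvu]
    norm_num
  exfalso
  obtain ⟨t, ht, S, hS, rfl, -, p, hp, hdt⟩ :=
    T.exists_eq_add_of_ip_one hInt hSmall hR hR0 hR1
  obtain ⟨q, hq⟩ := T.exists_deg_eq_natCast hInt hS
  rw [map_add, hdt, hq] at hdP
  have hsum : m + (n + (p + q)) = 10 := by exact_mod_cast hdP
  have key : ∀ x ∈ T.B, ∀ y ∈ T.B, ∀ z ∈ T.cone, w * c = x + (y + z) →
      T.deg x = 3 → T.deg y = 3 → False := by
    intro x hx y hy z hz he hdx hdy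
    obtain ⟨i, hi⟩ := T.exists_ip_eq_natCast (T.basis_mem_cone hy) (T.basis_mem_cone hx)
    obtain ⟨j, hj⟩ := T.exists_ip_eq_natCast (T.basis_mem_cone hx) (T.basis_mem_cone hy)
    obtain ⟨k, hk⟩ := T.exists_ip_eq_natCast hz (T.basis_mem_cone hx)
    obtain ⟨l, hl⟩ := T.exists_ip_eq_natCast hz (T.basis_mem_cone hy)
    have h1 : T.ip (c * x) w = ((1 + i + k : ℕ) : ℂ) := by
      rw [← hmove, he]
      simp only [map_add, LinearMap.add_apply, T.ip_self _ hx, hi, hk]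
      push_cast; ring
    have h2 : T.ip (c * y) w = ((1 + j + l : ℕ) : ℂ) := by
      rw [← hmove, he]
      simp only [map_add, LinearMap.add_apply, T.ip_self _ hy, hj, hl]
      push_cast; ring
    have hxy : x = y := T.eq_of_common_constituent hInt hSmall hb8 hd8 hrb8 hc hrc hcc hw
      hx hdx hy hdy (by rw [h1]; exact_mod_cast (by omega : 1 + i + k ≠ 0))
      (by rw [h2]; exact_mod_cast (by omega : 1 + j + l ≠ 0))
    subst hxy
    rw [T.ip_self x hx] at hi
    have hi1 : i = 1 := by exact_mod_cast hi.symm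
    have := T.mul_deg_le hInt (T.mul_mem_cone hInt hc hx) hw (d := 6) (n := 9) h1
      (by exact_mod_cast hdw) (by rw [map_mul, hdc, hdx]; norm_num)
    omega
  have cb8 := T.basis_mem_cone hb8
  have cu := T.basis_mem_cone hu
  have cv := T.basis_mem_cone hv
  have ct := T.basis_mem_cone ht
  obtain ⟨h1, h2⟩ | ⟨h1, h2⟩ | ⟨h1, h2⟩ :
      (m = 3 ∧ n = 3) ∨ (m = 3 ∧ p = 3) ∨ (n = 3 ∧ p = 3) := by omega
  · exact key u hu v hv (b8 + t + S) (add_mem (add_mem cb8 ct) hS) (by rw [hPe]; ring)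
      (by simp [hdu, h1]) (by simp [hdv, h2])
  · exact key u hu t ht (b8 + v + S) (add_mem (add_mem cb8 cv) hS) (by rw [hPe]; ring)
      (by simp [hdu, h1]) (by simp [hdt, h2])
  · exact key v hv t ht (b8 + u + S) (add_mem (add_mem cb8 cu) hS) (by rw [hPe]; ring)
      (by simp [hdv, h1]) (by simp [hdt, h2])

end TAData

/-- Lemma 8.1: for a NITA generated by non-real `b₃` with
`b̄₃b₃ = 1 + b₈` and `b₃² = c₃ + b₆`, `c₃` real: `c₃² = 1 + b₈`,
`b̄₃c₃ = b₃ + x₆` with `x₆` non-real of degree 6, `b₈b₃ = x₆ + b₆b̄₃`,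
`b̄₆c₃ = x₆b̄₃`, `c₃b₈ = b₆ + x₆b₃` and `(b₈b₃, b₈b₃) ∈ {3, 4}`. -/
theorem stmt_17 {A : Type} [CommRing A] [Algebra ℂ A] (T : TAData A)
    (hInt : T.Integral) (hSmall : T.NoSmall)
    (b3 b8 c3 b6 : A)
    (hb3 : b3 ∈ T.B) (hd3 : T.deg b3 = 3) (hnr : T.bar b3 ≠ b3)
    (hgen : T.GeneratedBy b3)
    (hb8 : b8 ∈ T.B) (hd8 : T.deg b8 = 8)
    (hmul : T.bar b3 * b3 = 1 + b8)
    (hc3 : c3 ∈ T.B) (hdc3 : T.deg c3 = 3) (hrealc3 : T.bar c3 = c3)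
    (hb6 : b6 ∈ T.B) (hd6 : T.deg b6 = 6)
    (hsq : b3 * b3 = c3 + b6) :
    c3 * c3 = 1 + b8 ∧
    ∃ x6 ∈ T.B, T.deg x6 = 6 ∧ T.bar x6 ≠ x6 ∧
      T.bar b3 * c3 = b3 + x6 ∧
      b8 * b3 = x6 + b6 * T.bar b3 ∧
      T.bar b6 * c3 = x6 * T.bar b3 ∧
      c3 * b8 = b6 + x6 * b3 ∧
      (T.ip (b8 * b3) (b8 * b3) = 3 ∨ T.ip (b8 * b3) (b8 * b3) = 4) := by
  have hbb := T.bar_mem b3 hb3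
  have h1B := T.one_mem
  have hdb : T.deg (T.bar b3) = 3 := by rw [T.deg_bar, hd3]
  have hrb8 : T.bar b8 = b8 := by
    have h := congrArg T.bar hmul
    rw [map_mul, T.bar_bar, map_add, map_one] at h
    linear_combination hmul - h
  have h81 : T.ip b8 1 = 0 :=
    T.ip_basis_of_deg_ne hb8 h1B (by rw [hd8, map_one]; norm_num)
  have h18 : T.ip 1 b8 = 0 := by rw [T.ip_symm, h81]
  have hb6c : T.ip b6 c3 = 0 := T.ip_basis_of_deg_ne hb6 hc3 (by rw [hd6, hdc3]; norm_num)
  have hcb6 : T.ip c3 b6 = 0 := by rw [T.ip_symm, hb6c]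
  have hcc1 : T.ip (c3 * c3) 1 = 1 := by
    rw [T.ip_mul_left, hrealc3, mul_one, T.ip_self c3 hc3]
  have hac : T.ip (T.bar b3 * c3) b3 = 1 := by
    rw [T.ip_mul_left, T.bar_bar, hsq, map_add, T.ip_self c3 hc3, hcb6, add_zero]
  obtain ⟨P, hP, hPe⟩ := T.exists_eq_add_of_ip_ne_zero (T.mul_mem_cone hInt hc3 hc3) h1B
    (by rw [hcc1]; exact one_ne_zero)
  have hdP : T.deg P = 8 := by
    have h := congrArg T.deg hPe
    rw [map_mul, map_add, hdc3, map_one] at h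
    linear_combination -h
  obtain ⟨X, hX, hXe⟩ := T.exists_eq_add_of_ip_ne_zero (T.mul_mem_cone hInt hbb hc3) hb3
    (by rw [hac]; exact one_ne_zero)
  have hdX : T.deg X = 6 := by
    have h := congrArg T.deg hXe
    rw [map_mul, map_add, hdc3, hdb, hd3] at h
    linear_combination -h
  have hXb : T.ip X b3 = 0 := by
    rw [hXe, map_add, LinearMap.add_apply, T.ip_self b3 hb3] at hac
    linear_combination hac
  have hnorm : T.ip X X = T.ip P b8 := by
    have e1 : T.ip (T.bar b3 * c3) (T.bar b3 * c3) = 1 + T.ip X X := by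
      have := T.ip_symm b3 X
      rw [hXe]
      simp only [map_add, LinearMap.add_apply, T.ip_self b3 hb3, this, hXb]
      ring
    have e2 : T.ip (T.bar b3 * c3) (T.bar b3 * c3) = 1 + T.ip P b8 := by
      have h : T.bar (T.bar b3) * (T.bar b3 * c3) = c3 * (1 + b8) := by
        rw [T.bar_bar]
        linear_combination c3 * hmul
      rw [T.ip_mul_left, h, T.ip_assoc, hrealc3, hPe]
      have : T.ip P 1 = 0 := by
        rw [hPe, map_add, LinearMap.add_apply, T.ip_self 1 h1B] at hcc1
        linear_combination hcc1
      simp only [map_add, LinearMap.add_apply, T.ip_self 1 h1B, this, h18]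
      ring
    linear_combination e2 - e1
  have hP8 : T.ip P b8 ≠ 0 := by
    intro h
    have := T.eq_zero_of_ip_self hX (hnorm.trans h)
    rw [this, map_zero] at hdX
    norm_num at hdX
  have hPb : P = b8 := by
    obtain ⟨Q, hQ, rfl⟩ := T.exists_eq_add_of_ip_ne_zero hP hb8 hP8
    rw [T.eq_zero_of_deg hInt hQ (by rw [map_add, hd8] at hdP; linear_combination hdP), add_zero]
  subst hPb
  have hXB : X ∈ T.B := T.mem_basis_of_ip_self hX (hnorm.trans (T.ip_self P hb8))
  have hconj : b3 * c3 = T.bar b3 + T.bar X := by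
    have h := congrArg T.bar hXe
    rwa [map_mul, map_add, T.bar_bar, hrealc3] at h
  have hsqc : T.bar b3 * T.bar b3 = c3 + T.bar b6 := by
    have h := congrArg T.bar hsq
    rwa [map_mul, map_add, hrealc3] at h
  have e1 : P * b3 = X + b6 * T.bar b3 := by
    linear_combination T.bar b3 * hsq - b3 * hmul + hXe
  have e2 : T.bar b6 * c3 = X * T.bar b3 := by
    linear_combination -c3 * hsqc + T.bar b3 * hXe - hPe + hmul
  have e3 : c3 * P = b6 + X * b3 := by
    linear_combination b3 * hXe - c3 * hmul + hsq
  have e4 : c3 * T.bar X = b6 * T.bar b3 := by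
    linear_combination b3 * hPe - c3 * hconj + e1 - hXe
  have hbx : T.ip b3 X = 0 := by rw [T.ip_symm, hXb]
  have hk : T.ip (b6 * c3) P = 1 + T.ip b6 (X * b3) := by
    rw [T.ip_mul_right, hrealc3, e3, map_add, T.ip_self b6 hb6]
  obtain ⟨k, hk'⟩ := T.exists_ip_eq_natCast (T.basis_mem_cone hb6) (T.mul_mem_cone hInt hXB hb3)
  obtain ⟨hk1, hN⟩ := T.ip_mul_self_of_deg_six hInt hSmall hb8 hd8 hrb8 hc3 hdc3 hrealc3 hPe hb6
    hd6 (by rw [hk, hk']; exact_mod_cast (by omega : 1 + k ≠ 0))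
  refine ⟨hPe, X, hXB, hdX, ?_, hXe, e1, e2, e3, ?_⟩
  · intro hreal
    have h1 : T.ip (c3 * T.bar X) (T.bar b3) = 1 := by
      rw [T.ip_mul_left, hrealc3, mul_comm, hXe, map_add, hreal, T.ip_self X hXB, hXb, zero_add]
    have h0 : T.ip (b6 * T.bar b3) (T.bar b3) = 0 := by
      rw [T.ip_mul_right, T.bar_bar, mul_comm, hmul, map_add,
        T.ip_basis_of_deg_ne hb6 h1B (by rw [hd6, map_one]; norm_num),
        T.ip_basis_of_deg_ne hb6 hb8 (by rw [hd6, hd8]; norm_num), add_zero]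
    rw [e4, h0] at h1
    exact zero_ne_one h1
  · have hz : T.ip X (b6 * T.bar b3) = 0 := by
      rw [T.ip_symm, T.ip_mul_right, T.bar_bar, mul_comm b3 X]
      linear_combination hk1 - hk
    have hz' : T.ip (b6 * T.bar b3) X = 0 := by rw [T.ip_symm, hz]
    have hM : T.ip (b6 * T.bar b3) (b6 * T.bar b3) = T.ip (b6 * c3) (b6 * c3) := by
      rw [T.ip_mul_right, T.ip_mul_right b6 c3, T.bar_bar, hrealc3]
      congr 1
      linear_combination b6 * hmul - b6 * hPe
    have hfin : T.ip (P * b3) (P * b3) = 1 + T.ip (b6 * c3) (b6 * c3) := by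
      rw [e1, ← hM]
      simp only [map_add, LinearMap.add_apply, T.ip_self X hXB, hz, hz']
      ring
    rw [hfin]
    rcases hN with h | h
    · left; rw [h]; norm_num
    · right; rw [h]; norm_num
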